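/- For all n and i, the number of permutations σ ∈ S_n with des(σ) = i equals the number of permutations σ ∈ S_n with lec(σ) = i. -/

import Mathlib

/-!
Write `T(S)` for the sum of `X ^ stat w` over the words `w` whose letters are exactly those of a
finite set `S`, and `P(a, S)` for the sum of `X ^ stat (a w)` over the same words `w`, where
`a ∉ S`. Splitting off the first letter gives `T(S) = ∑_{b ∈ S} P(b, S \ b)` for `S ≠ ∅`. The
point of the proof is that `des` and `lec` both satisfy

  `P(a, S) = T(S) + ∑_{b ∈ S, b < a} (X - 1) P(b, S \ b)`      (`Recurrent`).

Together with `stat [] = 0` these two identities determine `T` by induction on `|S|`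
(`Recurrent.sum_eq`), so both statistics have the same generating function on `S = [1..n]`.

For `des` the recurrence is immediate from the first letter `b` of `w`: prepending `a` multiplies
the weight by `1 + (X - 1)` exactly when `b < a` (`recurrent_des`).

For `lec`, let `γ` be the increasing prefix in the hook factorization of `w`. Prepending `a` either
extends `γ` or creates the hook `a γ`, and in both cases `lec` grows by the number of letters of
`γ` below `a` (`lec_cons`). Summing the geometric progression,
`X ^ #{γ < a} = 1 + ∑_{b ∈ γ, b < a} (X - 1) X ^ #{γ < b}` (`pow_countP_eq`). For a fixed `b`,
deleting `b` from `γ` is a bijection from the words of `S` with `b ∈ γ` to the words of `S \ b`,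
and it turns the weight `X ^ (lec w + #{γ < b})` into `X ^ lec (b w')`
(`sum_mem_prefix`); this is the recurrence.
-/

namespace Paper

/-- number of descents of a word -/
def des : List ℕ → ℕ
  | a :: b :: t => (if b < a then 1 else 0) + des (b :: t)
  | _ => 0

/-- number of inversions of a word -/
def inv : List ℕ → ℕ
  | [] => 0
  | a :: t => (t.countP fun x => decide (x < a)) + inv t

/-- a word is (strictly) increasing -/
def Incr (w : List ℕ) : Prop := w.Chain' (· < ·)

/-- a word is a hook: `a₁ > a₂` and `a₂ < a₃ < ⋯ < a_s`, length ≥ 2 -/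
def IsHook : List ℕ → Prop
  | a :: b :: t => b < a ∧ (b :: t).Chain' (· < ·)
  | _ => False

/-- `(γ, hs)` is the hook factorization data of `w` -/
def IsHookFact (w γ : List ℕ) (hs : List (List ℕ)) : Prop :=
  Incr γ ∧ (∀ h ∈ hs, IsHook h) ∧ w = γ ++ hs.flatten

/-- the statistic `lec` computed from the hooks of a factorization -/
def lecVal (hs : List (List ℕ)) : ℕ := (hs.map inv).sum

/-- one-line word of `σ ∈ S_n`, with entries in `[1..n]` -/
def word {n : ℕ} (σ : Equiv.Perm (Fin n)) : List ℕ :=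
  List.ofFn fun i => (σ i : ℕ) + 1

/-- a word `w₁ ⋯ w_ℓ` with maximum in position `c` is a (nontrivial) reverse wave if
`c ≠ ℓ` and `w₁ < ⋯ < w_{c-1} < w_ℓ < w_{ℓ-1} < ⋯ < w_c`. -/
def IsRevWave (w : List ℕ) : Prop :=
  ∃ c, c + 1 < w.length ∧ (w.take c ++ (w.drop c).reverse).Chain' (· < ·)

/-- a word `w₁ ⋯ w_ℓ` with maximum in position `c` is a (nontrivial) wave if
`c ≠ ℓ` and `w_ℓ < w_{ℓ-1} < ⋯ < w_{c+1} < w₁ < ⋯ < w_c`. -/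
def IsWave (w : List ℕ) : Prop :=
  ∃ c, c + 1 < w.length ∧ ((w.drop (c + 1)).reverse ++ w.take (c + 1)).Chain' (· < ·)

/-- the maximal strictly decreasing run starting below `hi` and staying above `lo` -/
def decRun (hi lo : ℕ) : List ℕ → List ℕ
  | [] => []
  | b :: t => if b < hi ∧ lo < b then b :: decRun b lo t else []

def srwAux (lo : ℕ) : List ℕ → List ℕ
  | [] => []
  | [a] => [a]
  | a :: b :: t => if a < b then a :: srwAux a (b :: t) else a :: decRun a lo (b :: t)

/-- the special reverse wave of a word: the prefix `w₁ ⋯ w_s` where `t` is the position of the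
first descent (the whole word if none) and `s ≥ t` is maximal with
`w_t > w_{t+1} > ⋯ > w_s > w_{t-1}` (convention `w₀ = 0`). -/
def srw (w : List ℕ) : List ℕ := srwAux 0 w

/-- the number of special reverse descents: `des (srw w) + χ(w_s > w_{s+1})` -/
def srdes (w : List ℕ) : ℕ :=
  des (srw w) +
    match (srw w).getLast?, (w.drop (srw w).length).head? with
    | some x, some y => if y < x then 1 else 0
    | _, _ => 0

/-- the prefix `w₁ ⋯ w_t` of `w` ending at the position `t` of the first descent
(the whole word if there is no descent) -/
def incrPrefix : List ℕ → List ℕ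
  | [] => []
  | [a] => [a]
  | a :: b :: t => if a < b then a :: incrPrefix (b :: t) else [a]

/-- the special wave `w_r ⋯ w_t ⋯ w_s` of a word -/
def sw (w : List ℕ) : List ℕ :=
  let pre := incrPrefix w
  match w.drop pre.length with
  | [] => w
  | x :: rs =>
    let kept := pre.takeWhile fun u => decide (u < x)
    pre.drop kept.length ++ x :: decRun x (kept.getLastD 0) rs

/-- the word `w \ sw(w) = w₁ ⋯ w_{r-1} w_{s+1} ⋯ w_ℓ` obtained removing the special wave -/
def swCompl (w : List ℕ) : List ℕ :=
  let pre := incrPrefix w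
  match w.drop pre.length with
  | [] => []
  | x :: rs =>
    let kept := pre.takeWhile fun u => decide (u < x)
    kept ++ rs.drop (decRun x (kept.getLastD 0) rs).length

/-- insertion `ins(a,b) = a₁ ⋯ a_x b₁ ⋯ b_q a_{x+1} ⋯ a_p`, where `x` is maximal with
`a₁ < a₂ < ⋯ < a_x < b_q` -/
def ins (a b : List ℕ) : List ℕ :=
  let pfx := (incrPrefix a).takeWhile fun u => decide (u < b.getLastD 0)
  pfx ++ b ++ a.drop pfx.length

/-- the word `ρ = ρ₁ ⋯ ρ_m` (entries in `[1..n]`) associated to an injection `Fin m ↪ Fin n` -/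
def rho {n m : ℕ} (f : Fin m ↪ Fin n) : List ℕ :=
  List.ofFn fun j => (f j : ℕ) + 1

/-- descent number of the pair `(α₀, ρ)`: `des ρ + #{a ∈ α₀ : a > ρ₁}`,
where `α₀ = [n] \ {ρ₁, …, ρ_m}` -/
def desPair (n : ℕ) {m : ℕ} (f : Fin m ↪ Fin n) : ℕ :=
  des (rho f) + ((Finset.Icc 1 n).filter fun a => a ∉ rho f ∧ (rho f).headI < a).card

/-- descent number of the pair `(α₀, ρ)`, with `ρ` given as a list -/
def desPairL (n : ℕ) (ρ : List ℕ) : ℕ :=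
  des ρ + ((Finset.Icc 1 n).filter fun a => a ∉ ρ ∧ ρ.headI < a).card

/-- the map `μ`, sending `ρ` (with complementary set `α₀ = {α₁ < ⋯ < α_{n-k-1}}`) to
`α₁ ⋯ α_{n-k-m-1} α_{n-k-1} α_{n-k-2} ⋯ α_{n-k-m} ρ₁ ⋯ ρ_{k+1}`,
where `m = #{a ∈ α₀ : a > ρ₁}` -/
def mu (n : ℕ) (ρ : List ℕ) : List ℕ :=
  let A := ((Finset.Icc 1 n).filter fun a => a ∉ ρ).sort (· ≤ ·)
  let m := (A.filter fun a => decide (ρ.headI < a)).length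
  (A.take (A.length - m) ++ (A.drop (A.length - m)).reverse) ++ ρ

end Paper

namespace Paper

open Polynomial

/-! ### Words on a finite set -/

/-- The words in which each letter of `S` occurs exactly once. -/
def words (S : Finset ℕ) : Finset (List ℕ) :=
  ⟨Multiset.lists S.val, Multiset.lists_nodup_finset S⟩

lemma mem_words {S : Finset ℕ} {w : List ℕ} :
    w ∈ words S ↔ w.Nodup ∧ ∀ x, x ∈ w ↔ x ∈ S := by
  have h : w ∈ words S ↔ S.val = (w : Multiset ℕ) := by
    change w ∈ Multiset.lists S.val ↔ _
    rw [Multiset.mem_lists_iff]; rfl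
  rw [h]
  constructor
  · intro h
    refine ⟨?_, fun x => ?_⟩
    · have := S.nodup
      rwa [h, Multiset.coe_nodup] at this
    · rw [← Finset.mem_val, h, Multiset.mem_coe]
  · rintro ⟨h1, h2⟩
    refine (Multiset.Nodup.ext S.nodup (Multiset.coe_nodup.2 h1)).2 fun x => ?_
    simp [h2]

lemma words_empty : words ∅ = {[]} := by
  ext w
  simp only [mem_words, Finset.notMem_empty, iff_false, Finset.mem_singleton]
  constructor
  · rintro ⟨-, h⟩
    exact List.eq_nil_iff_forall_not_mem.2 h
  · rintro rfl
    simp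

lemma sum_words_eq {S : Finset ℕ} (hS : S.Nonempty) (f : List ℕ → ℤ[X]) :
    ∑ w ∈ words S, f w = ∑ b ∈ S, ∑ w ∈ words (S.erase b), f (b :: w) := by
  rw [Finset.sum_sigma']
  symm
  refine Finset.sum_bij (fun p _ => p.1 :: p.2) ?_ ?_ ?_ ?_
  · rintro ⟨b, w⟩ h
    simp only [Finset.mem_sigma, mem_words, Finset.mem_erase] at h ⊢
    obtain ⟨hb, h1, h2⟩ := h
    refine ⟨List.nodup_cons.2 ⟨by simp [h2], h1⟩, fun x => ?_⟩
    rw [List.mem_cons, h2]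
    by_cases hx : x = b <;> simp [hx, hb]
  · rintro ⟨b, w⟩ _ ⟨b', w'⟩ _ h
    simp only [List.cons.injEq] at h
    obtain ⟨rfl, rfl⟩ := h
    rfl
  · intro w hw
    rw [mem_words] at hw
    obtain ⟨h1, h2⟩ := hw
    cases w with
    | nil =>
      obtain ⟨x, hx⟩ := hS
      exact absurd ((h2 x).2 hx) (by simp)
    | cons b w =>
      rw [List.nodup_cons] at h1
      refine ⟨⟨b, w⟩, ?_, rfl⟩
      simp only [Finset.mem_sigma, mem_words, Finset.mem_erase]
      refine ⟨(h2 b).1 (by simp), h1.2, fun x => ?_⟩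
      rw [← h2 x, List.mem_cons]
      by_cases hx : x = b
      · simp [hx, h1.1]
      · simp [hx]
  · intros; rfl

/-! ### The recurrence and its uniqueness -/

/-- The recurrence for the generating function of `stat` over the words of `S` preceded by a
new letter `a`. -/
def Recurrent (stat : List ℕ → ℕ) : Prop :=
  ∀ (S : Finset ℕ) (a : ℕ), a ∉ S →
    ∑ w ∈ words S, (X : ℤ[X]) ^ stat (a :: w) =
      ∑ w ∈ words S, X ^ stat w +
        ∑ b ∈ S with b < a, (X - 1) * ∑ w ∈ words (S.erase b), X ^ stat (b :: w)

theorem Recurrent.sum_eq {s t : List ℕ → ℕ} (hs : Recurrent s) (ht : Recurrent t)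
    (hs0 : s [] = 0) (ht0 : t [] = 0) (S : Finset ℕ) :
    ∑ w ∈ words S, (X : ℤ[X]) ^ s w = ∑ w ∈ words S, X ^ t w := by
  -- both generating functions, with and without a prepended letter, are treated at once
  suffices H : ∀ (m : ℕ) (S : Finset ℕ), S.card = m →
      (∑ w ∈ words S, (X : ℤ[X]) ^ s w = ∑ w ∈ words S, X ^ t w) ∧
      ∀ a ∉ S, ∑ w ∈ words S, (X : ℤ[X]) ^ s (a :: w) = ∑ w ∈ words S, X ^ t (a :: w) from
    (H _ S rfl).1
  intro m
  induction m with
  | zero =>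
    intro S hS
    obtain rfl := Finset.card_eq_zero.1 hS
    have h : ∑ w ∈ words ∅, (X : ℤ[X]) ^ s w = ∑ w ∈ words ∅, X ^ t w := by
      simp [words_empty, hs0, ht0]
    refine ⟨h, fun a ha => ?_⟩
    rw [hs _ a ha, ht _ a ha, h]
    simp
  | succ m ih =>
    intro S hS
    have key : ∀ b ∈ S, ∑ w ∈ words (S.erase b), (X : ℤ[X]) ^ s (b :: w) =
        ∑ w ∈ words (S.erase b), X ^ t (b :: w) := fun b hb =>
      (ih (S.erase b) (by rw [Finset.card_erase_of_mem hb, hS]; rfl)).2 b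
        (Finset.notMem_erase b S)
    have hne : S.Nonempty := Finset.card_pos.1 (by omega)
    have h : ∑ w ∈ words S, (X : ℤ[X]) ^ s w = ∑ w ∈ words S, X ^ t w := by
      rw [sum_words_eq hne, sum_words_eq hne]
      exact Finset.sum_congr rfl key
    refine ⟨h, fun a ha => ?_⟩
    rw [hs _ a ha, ht _ a ha, h]
    congr 1
    exact Finset.sum_congr rfl fun b hb => by rw [key b (Finset.mem_filter.1 hb).1]

/-! ### Descents -/

theorem recurrent_des : Recurrent des := by
  intro S a ha
  rcases S.eq_empty_or_nonempty with rfl | hS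
  · simp [words_empty, des]
  · rw [sum_words_eq hS, sum_words_eq hS, Finset.sum_filter, ← Finset.sum_add_distrib]
    refine Finset.sum_congr rfl fun b _ => ?_
    by_cases h : b < a
    · simp only [des, h, if_true, pow_add, pow_one, ← Finset.mul_sum]
      ring
    · simp [des, h]

/-! ### The hook factorization -/

/-- The hook factorization `(γ, [α₁, …, α_k])` of a word, read from right to left: a new letter
`a` in front of `γ` either extends the increasing prefix `γ`, or closes the hook `a γ`. -/
def hookFact : List ℕ → List ℕ × List (List ℕ)
  | [] => ([], [])
  | a :: w =>
    match hookFact w with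
    | ([], hs) => ([a], hs)
    | (b :: g, hs) => if b < a then ([], (a :: b :: g) :: hs) else (a :: b :: g, hs)

/-- The statistic `lec` of a word. -/
def lec (w : List ℕ) : ℕ := lecVal (hookFact w).2

lemma incr_iff {w : List ℕ} : Incr w ↔ w.Pairwise (· < ·) :=
  List.isChain_iff_pairwise

lemma hookFact_spec {w : List ℕ} (hw : w.Nodup) :
    IsHookFact w (hookFact w).1 (hookFact w).2 := by
  induction w with
  | nil => simp [hookFact, IsHookFact, incr_iff]
  | cons a w ih =>
    rw [List.nodup_cons] at hw
    obtain ⟨h1, h2, h3⟩ := ih hw.2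
    rcases h : hookFact w with ⟨_ | ⟨b, g⟩, hs⟩
    · rw [h] at h1 h2 h3
      simp only [hookFact, h]
      exact ⟨by simp [incr_iff], h2, by simpa using h3⟩
    · rw [h] at h1 h2 h3
      simp only [hookFact, h]
      by_cases hb : b < a
      · simp only [hb, if_true]
        refine ⟨by simp [incr_iff], ?_, by simpa using h3⟩
        simp only [List.mem_cons, forall_eq_or_imp]
        exact ⟨⟨hb, h1⟩, h2⟩
      · have hab : a ≠ b := by
          rintro rfl
          exact hw.1 (by rw [h3]; simp)
        simp only [hb, if_false]
        refine ⟨?_, h2, by simpa using h3⟩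
        have hlt : a < b := by omega
        unfold Incr at h1 ⊢
        exact List.IsChain.cons_cons hlt h1

lemma hookFact_append {g r : List ℕ} (hg : Incr g) (hr : (hookFact r).1 = []) :
    hookFact (g ++ r) = (g, (hookFact r).2) := by
  induction g with
  | nil => rw [List.nil_append, ← hr]
  | cons a g ih =>
    rw [incr_iff, List.pairwise_cons, ← incr_iff] at hg
    have := ih hg.2
    rw [List.cons_append, hookFact, this]
    cases g with
    | nil => rfl
    | cons b g =>
      have : ¬ b < a := not_lt.2 (hg.1 b (by simp)).le
      simp [this]

lemma hookFact_flatten {hs : List (List ℕ)} (h : ∀ α ∈ hs, IsHook α) :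
    hookFact hs.flatten = ([], hs) := by
  induction hs with
  | nil => rfl
  | cons α hs ih =>
    simp only [List.mem_cons, forall_eq_or_imp] at h
    have h2 := ih h.2
    match α, h.1 with
    | a :: b :: g, ⟨hb, hg⟩ =>
      have := hookFact_append (g := b :: g) (r := hs.flatten) hg (by rw [h2])
      rw [List.flatten_cons, List.cons_append, hookFact, this, h2]
      simp [hb]

lemma hookFact_eq {γ : List ℕ} {hs : List (List ℕ)} (hγ : Incr γ) (h : ∀ α ∈ hs, IsHook α) :
    hookFact (γ ++ hs.flatten) = (γ, hs) := by
  rw [hookFact_append hγ (by rw [hookFact_flatten h]), hookFact_flatten h]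

/-- Existence and uniqueness of the hook factorization, in the form used by the theorem. -/
lemma exists_hookFact_iff {w : List ℕ} (hw : w.Nodup) (i : ℕ) :
    (∃ γ hs, IsHookFact w γ hs ∧ lecVal hs = i) ↔ lec w = i := by
  constructor
  · rintro ⟨γ, hs, ⟨h1, h2, rfl⟩, rfl⟩
    rw [lec, hookFact_eq h1 h2]
  · intro h
    exact ⟨_, _, hookFact_spec hw, h⟩

/-! ### The recurrence for `lec` -/

lemma inv_eq_zero {g : List ℕ} (hg : g.Pairwise (· < ·)) : inv g = 0 := by
  induction g with
  | nil => rfl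
  | cons a g ih =>
    rw [List.pairwise_cons] at hg
    rw [inv, ih hg.2, List.countP_eq_zero.2]
    intro x hx
    simpa using (hg.1 x hx).le

lemma lec_cons {a : ℕ} {w : List ℕ} (hw : w.Nodup) :
    lec (a :: w) = (hookFact w).1.countP (fun x => decide (x < a)) + lec w := by
  have h1 := incr_iff.1 (hookFact_spec hw).1
  unfold lec
  rcases h : hookFact w with ⟨_ | ⟨b, g⟩, hs⟩
  · simp [hookFact, h]
  · rw [h] at h1
    simp only [hookFact, h]
    by_cases hb : b < a
    · rw [if_pos hb]
      simp only [lecVal, List.map_cons, List.sum_cons]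
      rw [inv, inv_eq_zero h1, add_zero]
    · rw [if_neg hb, List.countP_eq_zero.2, zero_add]
      rw [List.pairwise_cons] at h1
      intro x hx
      rcases List.mem_cons.1 hx with rfl | hx
      · simpa using hb
      · have := h1.1 x hx
        simp only [decide_eq_true_eq]
        omega

/-- A telescoping geometric sum: on an increasing word, the letters `b` below `a` have
`0, 1, 2, …` letters below them. -/
lemma pow_countP_eq (a : ℕ) {g : List ℕ} (hg : g.Pairwise (· < ·)) :
    (X : ℤ[X]) ^ g.countP (fun x => decide (x < a)) =
      1 + ∑ b ∈ g.toFinset with b < a, (X - 1) * X ^ g.countP (fun x => decide (x < b)) := by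
  induction g with
  | nil => simp
  | cons c g ih =>
    rw [List.pairwise_cons] at hg
    by_cases hc : c < a
    · have hcg : c ∉ {b ∈ g.toFinset | b < a} := by
        simp only [Finset.mem_filter, List.mem_toFinset, not_and]
        intro h
        exact absurd (hg.1 c h) (lt_irrefl c)
      have h0 : (c :: g).countP (fun x => decide (x < c)) = 0 := by
        rw [List.countP_eq_zero]
        intro x hx
        rcases List.mem_cons.1 hx with rfl | hx
        · simp
        · simpa using (hg.1 x hx).le
      have h1 : ∀ b ∈ {b ∈ g.toFinset | b < a},
          (X - 1) * (X : ℤ[X]) ^ (c :: g).countP (fun x => decide (x < b)) =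
            X * ((X - 1) * X ^ g.countP (fun x => decide (x < b))) := by
        intro b hb
        simp only [Finset.mem_filter, List.mem_toFinset] at hb
        rw [List.countP_cons_of_pos (by simpa using hg.1 b hb.1), pow_succ]
        ring
      rw [List.toFinset_cons, Finset.filter_insert, if_pos hc, Finset.sum_insert hcg, h0,
        Finset.sum_congr rfl h1, ← Finset.mul_sum,
        List.countP_cons_of_pos (by simpa using hc), pow_succ, ih hg.2]
      ring
    · have hall : ∀ x ∈ c :: g, ¬ x < a := by
        intro x hx
        rcases List.mem_cons.1 hx with rfl | hx
        · exact hc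
        · have := hg.1 x hx
          omega
      rw [List.countP_eq_zero.2 (by simpa using hall), Finset.filter_false_of_mem]
      · simp
      · intro x hx
        exact hall x (List.mem_toFinset.1 hx)

/-- Deleting `b` from the increasing prefix is a bijection from the words of `S` with `b` in that
prefix to the words of `S \ b`; the inverse inserts `b` into the increasing prefix. -/
lemma sum_mem_prefix {S : Finset ℕ} {b : ℕ} (hb : b ∈ S) :
    ∑ w ∈ words S with b ∈ (hookFact w).1,
        (X : ℤ[X]) ^ ((hookFact w).1.countP (fun x => decide (x < b)) + lec w) =
      ∑ w ∈ words (S.erase b), X ^ lec (b :: w) := by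
  -- the factorizations after deleting and after inserting `b`
  have hdel : ∀ w : List ℕ, w.Nodup →
      hookFact ((hookFact w).1.erase b ++ (hookFact w).2.flatten) =
        ((hookFact w).1.erase b, (hookFact w).2) := fun w hw =>
    hookFact_eq (incr_iff.2 ((incr_iff.1 (hookFact_spec hw).1).sublist List.erase_sublist))
      (hookFact_spec hw).2.1
  have hins : ∀ w : List ℕ, w.Nodup → b ∉ w →
      hookFact ((hookFact w).1.orderedInsert (· ≤ ·) b ++ (hookFact w).2.flatten) =
        ((hookFact w).1.orderedInsert (· ≤ ·) b, (hookFact w).2) := by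
    intro w hw hbw
    obtain ⟨h1, h2, h3⟩ := hookFact_spec hw
    refine hookFact_eq (incr_iff.2 ?_) h2
    have h1 := incr_iff.1 h1
    have hle := (h1.imp (fun h => le_of_lt h)).orderedInsert b
    have hnd : ((hookFact w).1.orderedInsert (· ≤ ·) b).Nodup := by
      rw [(List.perm_orderedInsert _ b _).nodup_iff, List.nodup_cons]
      refine ⟨fun h => hbw ?_, h1.imp (fun h => ne_of_lt h)⟩
      rw [h3]
      exact List.mem_append_left _ h
    exact (hle.and hnd).imp fun h => lt_of_le_of_ne h.1 h.2
  refine Finset.sum_bij'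
    (fun w _ => (hookFact w).1.erase b ++ (hookFact w).2.flatten)
    (fun w _ => (hookFact w).1.orderedInsert (· ≤ ·) b ++ (hookFact w).2.flatten)
    ?_ ?_ ?_ ?_ ?_
  · intro w hw
    simp only [Finset.mem_filter, mem_words] at hw
    obtain ⟨⟨h1, h2⟩, h3⟩ := hw
    have h4 := (hookFact_spec h1).2.2
    rw [← List.erase_append_left _ h3, ← h4, mem_words]
    refine ⟨h1.erase b, fun x => ?_⟩
    rw [h1.mem_erase_iff, Finset.mem_erase, h2]
  · intro w hw
    rw [mem_words] at hw
    obtain ⟨h1, h2⟩ := hw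
    have hbw : b ∉ w := by simp [h2]
    have hp : ((hookFact w).1.orderedInsert (· ≤ ·) b ++ (hookFact w).2.flatten).Perm
        (b :: w) := by
      conv_rhs => rw [(hookFact_spec h1).2.2, ← List.cons_append]
      exact (List.perm_orderedInsert _ b _).append_right _
    simp only [Finset.mem_filter, mem_words]
    refine ⟨⟨?_, fun x => ?_⟩, ?_⟩
    · rw [hp.nodup_iff, List.nodup_cons]
      exact ⟨hbw, h1⟩
    · rw [hp.mem_iff, List.mem_cons, h2, Finset.mem_erase]
      by_cases hx : x = b <;> simp [hx, hb]
    · rw [hins w h1 hbw]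
      simp
  · intro w hw
    simp only [Finset.mem_filter, mem_words] at hw
    obtain ⟨⟨h1, h2⟩, h3⟩ := hw
    have h4 := hookFact_spec h1
    simp only [hdel w h1]
    rw [List.orderedInsert_erase _ _ h3 ((incr_iff.1 h4.1).imp (fun h => le_of_lt h)), ← h4.2.2]
  · intro w hw
    rw [mem_words] at hw
    obtain ⟨h1, h2⟩ := hw
    have hbw : b ∉ w := by simp [h2]
    simp only [hins w h1 hbw]
    rw [List.erase_orderedInsert, ← (hookFact_spec h1).2.2]
  · intro w hw
    simp only [Finset.mem_filter, mem_words] at hw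
    obtain ⟨⟨h1, h2⟩, h3⟩ := hw
    have h4 := hookFact_spec h1
    have hnd : ((hookFact w).1.erase b ++ (hookFact w).2.flatten).Nodup := by
      rw [← List.erase_append_left _ h3, ← h4.2.2]
      exact h1.erase b
    rw [lec_cons hnd, lec, lec, hdel w h1]
    congr 2
    -- `b` itself is not counted among the letters below `b`
    rw [(List.perm_cons_erase h3).countP_eq, List.countP_cons_of_neg (by simp)]

theorem recurrent_lec : Recurrent lec := by
  intro S a ha
  have h1 : ∀ w ∈ words S, (X : ℤ[X]) ^ lec (a :: w) = X ^ lec w +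
      ∑ b ∈ S with b < a, if b ∈ (hookFact w).1 then
        (X - 1) * X ^ ((hookFact w).1.countP (fun x => decide (x < b)) + lec w) else 0 := by
    intro w hw
    rw [mem_words] at hw
    have hf := hookFact_spec hw.1
    rw [lec_cons hw.1, pow_add, pow_countP_eq a (incr_iff.1 hf.1), add_mul, one_mul,
      Finset.sum_mul, ← Finset.sum_filter]
    congr 1
    refine Finset.sum_congr ?_ fun b _ => by rw [pow_add, mul_assoc]
    ext b
    simp only [Finset.mem_filter, List.mem_toFinset]
    have : b ∈ (hookFact w).1 → b ∈ S := fun h => by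
      rw [← hw.2, hf.2.2]
      exact List.mem_append_left _ h
    tauto
  rw [Finset.sum_congr rfl h1, Finset.sum_add_distrib, Finset.sum_comm]
  congr 1
  refine Finset.sum_congr rfl fun b hb => ?_
  rw [← Finset.sum_filter, ← Finset.mul_sum, sum_mem_prefix (Finset.mem_filter.1 hb).1]

/-! ### From words to permutations -/

lemma word_nodup {n : ℕ} (σ : Equiv.Perm (Fin n)) : (word σ).Nodup := by
  refine List.nodup_ofFn.2 fun i j h => ?_
  exact σ.injective (Fin.ext (by simpa using h))

lemma sum_word_eq (n : ℕ) (f : List ℕ → ℤ[X]) :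
    ∑ σ : Equiv.Perm (Fin n), f (word σ) = ∑ w ∈ words (Finset.Icc 1 n), f w := by
  refine Finset.sum_bij (fun σ _ => word σ) ?_ ?_ ?_ ?_
  · intro σ _
    refine mem_words.2 ⟨word_nodup σ, fun x => ?_⟩
    rw [word, List.mem_ofFn, Finset.mem_Icc]
    constructor
    · rintro ⟨i, rfl⟩
      have := (σ i).isLt
      omega
    · rintro ⟨h1, h2⟩
      refine ⟨σ.symm ⟨x - 1, by omega⟩, ?_⟩
      simp
      omega
  · intro σ _ τ _ h
    ext i
    have := congrFun (List.ofFn_injective h) i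
    simpa using this
  · intro w hw
    rw [mem_words] at hw
    obtain ⟨h1, h2⟩ := hw
    have hlen : w.length = n := by
      have : w.toFinset = Finset.Icc 1 n := by
        ext x
        simp only [List.mem_toFinset, h2]
      rw [← List.toFinset_card_of_nodup h1, this]
      simp
    subst hlen
    have hm : ∀ i : Fin w.length, 1 ≤ w.get i ∧ w.get i ≤ w.length := fun i =>
      Finset.mem_Icc.1 ((h2 _).1 (List.get_mem w i))
    let g : Fin w.length → Fin w.length := fun i =>
      ⟨w.get i - 1, by have := hm i; omega⟩
    have hg : Function.Injective g := by
      intro i j hij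
      have h := congrArg Fin.val hij
      simp only [g] at h
      have hi := hm i
      have hj := hm j
      exact h1.injective_get (by omega)
    refine ⟨Equiv.ofBijective g (Finite.injective_iff_bijective.1 hg), Finset.mem_univ _, ?_⟩
    have : (fun i => (g i : ℕ) + 1) = w.get := by
      funext i
      have := hm i
      simp only [g]
      omega
    change List.ofFn (fun i => (g i : ℕ) + 1) = w
    rw [this, List.ofFn_get]
  · intros; rfl

/-- The number of permutations with `stat = i` is a coefficient of the generating function. -/
lemma card_eq_coeff (n i : ℕ) (stat : List ℕ → ℕ) :
    (Nat.card {σ : Equiv.Perm (Fin n) // stat (word σ) = i} : ℤ) =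
      (∑ w ∈ words (Finset.Icc 1 n), (X : ℤ[X]) ^ stat w).coeff i := by
  rw [← sum_word_eq n fun w => X ^ stat w, finsetSum_coeff, Nat.card_eq_fintype_card,
    Fintype.card_subtype]
  simp [coeff_X_pow, eq_comm]

end Paper

/-- the number of `σ ∈ S_n` with `des σ = i` equals the number of `σ ∈ S_n`
with `lec σ = i`. -/
theorem Paper.statement18 (n i : ℕ) :
    Nat.card {σ : Equiv.Perm (Fin n) // des (word σ) = i} =
      Nat.card {σ : Equiv.Perm (Fin n) //
        ∃ γ hs, IsHookFact (word σ) γ hs ∧ lecVal hs = i} := by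
  simp only [exists_hookFact_iff (word_nodup _)]
  have h := recurrent_des.sum_eq recurrent_lec rfl rfl (Finset.Icc 1 n)
  have := card_eq_coeff n i des
  rw [h, ← card_eq_coeff n i lec] at this
  exact_mod_cast this
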